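/- For every n ≥ 3, the n×n {0,1}-matrix A (indices taken in {1,…,n}) defined by: A_{ij} = 1 if i ≡ j+1 (mod n), or if i = n and j ≠ n, or if (i,j) = (1,2); and A_{ij} = 0 otherwise, is two-fold irreducible (both A and AᵀA are irreducible) but is partly decomposable (not fully indecomposable). Hence full indecomposability is not necessary for two-fold irreducibility. -/

import Mathlib

open Matrix

/-- A nonnegative matrix is irreducible if for every pair (i,j) some power has a
positive (i,j) entry. -/
def MatIrred {n : ℕ} (A : Matrix (Fin n) (Fin n) ℝ) : Prop :=
  ∀ i j : Fin n, ∃ m : ℕ, 0 < m ∧ 0 < (A ^ m) i j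

/-- A nonnegative matrix is primitive if some power has all entries positive. -/
def MatPrimitive {n : ℕ} (A : Matrix (Fin n) (Fin n) ℝ) : Prop :=
  ∃ m : ℕ, 0 < m ∧ ∀ i j : Fin n, 0 < (A ^ m) i j

/-- A square matrix is fully indecomposable if there are no nonempty index sets
S, T with |S| + |T| = n and A_{ij} = 0 for all i ∈ S, j ∈ T. -/
def FullyIndec {n : ℕ} (A : Matrix (Fin n) (Fin n) ℝ) : Prop :=
  ¬ ∃ S T : Finset (Fin n), S.Nonempty ∧ T.Nonempty ∧ S.card + T.card = n ∧
      ∀ i ∈ S, ∀ j ∈ T, A i j = 0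


lemma pow_nonneg_aux {n : ℕ} (A : Matrix (Fin n) (Fin n) ℝ) (hA : ∀ i j, 0 ≤ A i j) (m : ℕ) :
    ∀ i j, 0 ≤ (A ^ m) i j := by
  induction m with
  | zero =>
    intro i j
    rw [pow_zero, Matrix.one_apply]
    split_ifs <;> norm_num
  | succ k ih =>
    intro i j
    rw [pow_succ, Matrix.mul_apply]
    exact Finset.sum_nonneg fun x _ => mul_nonneg (ih i x) (hA x j)

lemma mul_pos_aux {n : ℕ} (A B : Matrix (Fin n) (Fin n) ℝ) (hA : ∀ i j, 0 ≤ A i j)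
    (hB : ∀ i j, 0 ≤ B i j) (i k j : Fin n) (h1 : 0 < A i k) (h2 : 0 < B k j) :
    0 < (A * B) i j := by
  rw [Matrix.mul_apply]
  exact Finset.sum_pos' (fun x _ => mul_nonneg (hA i x) (hB x j))
    ⟨k, Finset.mem_univ _, mul_pos h1 h2⟩

lemma reach_trans {n : ℕ} (A : Matrix (Fin n) (Fin n) ℝ) (hA : ∀ i j, 0 ≤ A i j)
    {i k j : Fin n} (h1 : ∃ m : ℕ, 0 < m ∧ 0 < (A ^ m) i k)
    (h2 : ∃ m : ℕ, 0 < m ∧ 0 < (A ^ m) k j) : ∃ m : ℕ, 0 < m ∧ 0 < (A ^ m) i j := by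
  obtain ⟨a, ha, ha'⟩ := h1
  obtain ⟨b, hb, hb'⟩ := h2
  refine ⟨a + b, by omega, ?_⟩
  rw [pow_add]
  exact mul_pos_aux _ _ (pow_nonneg_aux A hA a) (pow_nonneg_aux A hA b) i k j ha' hb'

lemma reach_one {n : ℕ} (A : Matrix (Fin n) (Fin n) ℝ)
    {i j : Fin n} (h : 0 < A i j) : ∃ m : ℕ, 0 < m ∧ 0 < (A ^ m) i j :=
  ⟨1, one_pos, by rwa [pow_one]⟩

theorem stmt13 {n : ℕ} (hn : 3 ≤ n) (A : Matrix (Fin n) (Fin n) ℝ)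
    (hAdef : ∀ i j : Fin n,
      A i j = if (i.val = (j.val + 1) % n ∨
                  (i.val = n - 1 ∧ j.val ≠ n - 1) ∨
                  (i.val = 0 ∧ j.val = 1)) then 1 else 0) :
    (MatIrred A ∧ MatIrred (Aᵀ * A)) ∧ ¬ FullyIndec A := by
  have hA : ∀ i j, 0 ≤ A i j := by
    intro i j
    rw [hAdef]
    split_ifs <;> norm_num
  have hpos : ∀ i j : Fin n, (i.val = (j.val + 1) % n ∨
                  (i.val = n - 1 ∧ j.val ≠ n - 1) ∨
                  (i.val = 0 ∧ j.val = 1)) → 0 < A i j := by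
    intro i j h
    rw [hAdef, if_pos h]
    exact one_pos
  let z : Fin n := ⟨0, by omega⟩
  let o : Fin n := ⟨1, by omega⟩
  let l : Fin n := ⟨n - 1, by omega⟩
  have hzl : 0 < A z l := hpos z l (Or.inl (by
    change 0 = (n - 1 + 1) % n
    rw [Nat.sub_add_cancel (by omega), Nat.mod_self]))
  have hzo : 0 < A z o := hpos z o (Or.inr (Or.inr ⟨rfl, rfl⟩))
  have hl : ∀ j : Fin n, j ≠ l → 0 < A l j := fun j hj =>
    hpos l j (Or.inr (Or.inl ⟨rfl, fun h => hj (Fin.ext h)⟩))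
  have hol : o ≠ l := by
    intro h
    have : (1 : ℕ) = n - 1 := congrArg Fin.val h
    omega
  refine ⟨⟨?_, ?_⟩, ?_⟩
  · have key : ∀ k (hk : k < n), ∃ m : ℕ, 0 < m ∧ 0 < (A ^ m) ⟨k, hk⟩ l := by
      intro k
      induction k with
      | zero => exact fun _ => reach_one A hzl
      | succ k ih =>
        intro hk
        refine reach_trans A hA (reach_one A (hpos _ ⟨k, by omega⟩ (Or.inl ?_))) (ih (by omega))
        exact (Nat.mod_eq_of_lt hk).symm
    intro i j
    by_cases hj : j = l
    · rw [hj]; exact key i.1 i.2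
    · exact reach_trans A hA (key i.1 i.2) (reach_one A (hl j hj))
  · have hT : ∀ i j, 0 ≤ Aᵀ i j := fun i j => hA j i
    have hB : ∀ i j, 0 ≤ (Aᵀ * A) i j := fun i j => by
      rw [Matrix.mul_apply]
      exact Finset.sum_nonneg fun x _ => mul_nonneg (hT i x) (hA x j)
    have hM : ∀ k i j, 0 < A k i → 0 < A k j → ∃ m : ℕ, 0 < m ∧ 0 < ((Aᵀ * A) ^ m) i j :=
      fun k i j h1 h2 => reach_one _ (mul_pos_aux Aᵀ A hT hA i k j h1 h2)
    have h1 : ∀ i, ∃ m : ℕ, 0 < m ∧ 0 < ((Aᵀ * A) ^ m) i o := fun i => by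
      by_cases hi : i = l
      · rw [hi]; exact hM z l o hzl hzo
      · exact hM l i o (hl i hi) (hl o hol)
    have h2 : ∀ i, ∃ m : ℕ, 0 < m ∧ 0 < ((Aᵀ * A) ^ m) o i := fun i => by
      by_cases hi : i = l
      · rw [hi]; exact hM z o l hzo hzl
      · exact hM l o i (hl o hol) (hl i hi)
    exact fun i j => reach_trans _ hB (h1 i) (h2 j)
  · intro h
    apply h
    refine ⟨{o}, {z}ᶜ, Finset.singleton_nonempty _, ⟨o, ?_⟩, ?_, ?_⟩
    · simp [o, z]
    · rw [Finset.card_compl, Finset.card_singleton, Finset.card_singleton, Fintype.card_fin]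
      omega
    · intro i hi j hj
      rw [Finset.mem_singleton] at hi
      subst hi
      have hj0 : j.val ≠ 0 := fun h => by
        simp only [Finset.mem_compl, Finset.mem_singleton] at hj
        exact hj (Fin.ext h)
      rw [hAdef, if_neg]
      change ¬ (1 = (j.val + 1) % n ∨ (1 = n - 1 ∧ _) ∨ (1 = 0 ∧ _))
      have hjn := j.2
      rintro (h | ⟨h, _⟩ | ⟨h, _⟩)
      · rcases Nat.lt_or_ge (j.val + 1) n with h' | h'
        · rw [Nat.mod_eq_of_lt h'] at h; omega
        · have : j.val + 1 = n := by omega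
          rw [this, Nat.mod_self] at h; omega
      · omega
      · omega
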